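/- Let w, z ∈ ℝ² be nonzero vectors with ⟨w, z⟩ = 0, and let R : ℝ² → ℝ² be the linear reflection determined by Rw = w and Rz = −z. Let Λ ⊆ ℝ² be a planar lattice such that ℤw + ℤz ⊆ Λ, R(Λ) = Λ, and both w and z are primitive in Λ. Then either Λ = ℤw + ℤz, or Λ = ℤ·(w+z)/2 + ℤ·(w−z)/2. -/

import Mathlib

noncomputable section

open scoped RealInnerProductSpace

/-- The Euclidean plane. -/
abbrev EucPlane : Type := EuclideanSpace ℝ (Fin 2)

/-- A planar lattice: the additive subgroup generated by two linearly independent vectors. -/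
def IsPlanarLattice (Λ : AddSubgroup EucPlane) : Prop :=
  ∃ v₁ v₂ : EucPlane, LinearIndependent ℝ ![v₁, v₂] ∧ Λ = AddSubgroup.closure {v₁, v₂}

/-- A vector `w` is primitive in `Λ` if `w ∈ Λ` and it is not a proper integral
multiple of a lattice vector. -/
def IsPrimitiveIn (Λ : AddSubgroup EucPlane) (w : EucPlane) : Prop :=
  w ∈ Λ ∧ ∀ (m : ℤ) (u : EucPlane), u ∈ Λ → w = m • u → m = 1 ∨ m = -1

/-!
The vectors `v + R v` and `v - R v` are fixed and negated by `R`. As `w` and `z` are eigenvectors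
for distinct eigenvalues, they are independent in the rank-two group `Λ`, so some nonzero multiples
of `v + R v` and `v - R v` lie in `ℤw` and `ℤz`, and by primitivity `v + R v` and `v - R v` do
themselves. Adding, `2 • v = m • w + n • z` with integers `m`, `n`. If one of `m`, `n` is even,
primitivity makes the other even as well, and `v` lies in `ℤw + ℤz`; if both are odd, then
`(w + z) / 2` lies in `v + ℤw + ℤz`, and together with `(w - z) / 2` it generates `Λ`.
-/

/-- Primitivity of a vector in a subgroup of an arbitrary abelian group. For the Euclidean plane it
unfolds to the same proposition as `IsPrimitiveIn`. -/
def IsPrimitiveElement {G : Type*} [AddCommGroup G] (Λ : AddSubgroup G) (w : G) : Prop :=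
  w ∈ Λ ∧ ∀ (m : ℤ) (u : G), u ∈ Λ → w = m • u → m = 1 ∨ m = -1

theorem exists_smul_mem_span_of_rank_le {R M ι : Type*} [Ring R] [StrongRankCondition R]
    [AddCommGroup M] [Module R M] [Fintype ι] {b : ι → M} (hb : LinearIndependent R b)
    (hrank : Module.rank R M ≤ Fintype.card ι) (x : M) :
    ∃ r : R, r ≠ 0 ∧ r • x ∈ Submodule.span R (Set.range b) := by
  have := nontrivial_of_invariantBasisNumber R
  have hspan : Module.rank R (Submodule.span R (Set.range b)) = Fintype.card ι := by
    classical
    rw [rank_span hb, Cardinal.mk_fintype, Set.card_range_of_injective hb.injective]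
  have hquot : Module.rank R (M ⧸ Submodule.span R (Set.range b)) = 0 := by
    have hsum := (rank_quotient_add_rank_le (Submodule.span R (Set.range b))).trans hrank
    rw [hspan] at hsum
    exact nonpos_iff_eq_zero.1 ((Cardinal.add_nat_le_add_nat_iff _).1 (by rwa [zero_add]))
  obtain ⟨r, hr, hrx⟩ := rank_eq_zero_iff.1 hquot (Submodule.Quotient.mk x)
  exact ⟨r, hr, (Submodule.Quotient.mk_eq_zero _).1 hrx⟩

theorem rank_closure_pair_le {G : Type*} [AddCommGroup G] (a b : G) :
    Module.rank ℤ (AddSubgroup.closure {a, b}) ≤ 2 := by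
  classical
  have h := rank_span_finset_le (R := ℤ) ({a, b} : Finset G)
  rw [Finset.coe_pair, ← AddSubgroup.toIntSubmodule_closure] at h
  exact h.trans (mod_cast Finset.card_le_two)

theorem exists_zsmul_mem_closure_pair {G : Type*} [AddCommGroup G] {Λ : AddSubgroup G} {v w z : G}
    (hrank : Module.rank ℤ Λ ≤ 2) (hw : w ∈ Λ) (hz : z ∈ Λ) (hwz : LinearIndependent ℤ ![w, z])
    (hv : v ∈ Λ) : ∃ n : ℤ, n ≠ 0 ∧ n • v ∈ AddSubgroup.closure {w, z} := by
  have hli : LinearIndependent ℤ ![(⟨w, hw⟩ : Λ), ⟨z, hz⟩] := by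
    refine .of_comp Λ.subtype.toIntLinearMap ?_
    convert hwz using 1
    ext i
    fin_cases i <;> rfl
  obtain ⟨n, hn, hnv⟩ := exists_smul_mem_span_of_rank_le hli (by simpa using hrank) ⟨v, hv⟩
  rw [Matrix.range_cons_cons_empty, Submodule.mem_span_pair] at hnv
  obtain ⟨a, b, hab⟩ := hnv
  exact ⟨n, hn, AddSubgroup.mem_closure_pair.2 ⟨a, b, congrArg Subtype.val hab⟩⟩

section

variable {G : Type*} [AddCommGroup G] {Λ : AddSubgroup G} {v w z u u' : G}

theorem IsPrimitiveElement.ne_zero (hw : IsPrimitiveElement Λ w) : w ≠ 0 := by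
  rintro rfl
  simpa using hw.2 0 0 Λ.zero_mem (zero_zsmul 0).symm

variable [IsAddTorsionFree G]

theorem IsPrimitiveElement.mem_zmultiples_of_zsmul_mem (hw : IsPrimitiveElement Λ w) (hv : v ∈ Λ)
    {n : ℤ} (hn : n ≠ 0) (h : n • v ∈ AddSubgroup.zmultiples w) :
    v ∈ AddSubgroup.zmultiples w := by
  obtain ⟨m, hm : m • w = n • v⟩ := h
  obtain ⟨d, n', m', -, hcop, rfl, rfl⟩ := Int.exists_gcd_one' (Int.gcd_pos_of_ne_zero_left m hn)
  have hred : m' • w = n' • v := by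
    apply zsmul_right_injective (right_ne_zero_of_mul hn)
    simpa only [mul_zsmul'] using hm
  obtain ⟨x, y, hxy⟩ := Int.isCoprime_iff_gcd_eq_one.2 hcop
  have hwn : w = n' • (x • w + y • v) :=
    calc
      w = (x * n' + y * m') • w := by rw [hxy, one_zsmul]
      _ = (x * n') • w + y • (m' • w) := by module
      _ = n' • (x • w + y • v) := by rw [hred]; module
  rcases hw.2 n' _ (Λ.add_mem (Λ.zsmul_mem hw.1 x) (Λ.zsmul_mem hv y)) hwn with rfl | rfl
  · exact ⟨m', by simpa using hred⟩
  · exact ⟨-m', by simp [hred]⟩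

theorem linearIndependent_pair_of_map_eq_neg {σ : G →+ G} (hσw : σ w = w) (hσz : σ z = -z)
    (hw : w ≠ 0) (hz : z ≠ 0) : LinearIndependent ℤ ![w, z] := by
  refine Module.End.eigenvectors_linearIndependent' σ.toIntLinearMap ![1, -1] (by decide) _ ?_
  rw [Fin.forall_fin_two]
  simp [Module.End.hasEigenvector_iff, hσw, hσz, hw, hz]

theorem add_map_mem_zmultiples {σ : G →+ G} (hσw : σ w = w) (hσz : σ z = -z)
    (hσΛ : Λ.map σ ≤ Λ) (hrank : Module.rank ℤ Λ ≤ 2) (hw : IsPrimitiveElement Λ w)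
    (hz : z ∈ Λ) (hz_ne : z ≠ 0) (hv : v ∈ Λ) : v + σ v ∈ AddSubgroup.zmultiples w := by
  obtain ⟨n, hn, hnv⟩ := exists_zsmul_mem_closure_pair hrank hw.1 hz
    (linearIndependent_pair_of_map_eq_neg hσw hσz hw.ne_zero hz_ne) hv
  obtain ⟨a, b, hab⟩ := AddSubgroup.mem_closure_pair.1 hnv
  refine hw.mem_zmultiples_of_zsmul_mem
    (Λ.add_mem hv (hσΛ (AddSubgroup.mem_map_of_mem σ hv))) hn ⟨2 * a, ?_⟩
  calc
    (2 * a) • w = (a • w + b • z) + σ (a • w + b • z) := by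
        rw [map_add, map_zsmul, map_zsmul, hσw, hσz]; module
    _ = n • (v + σ v) := by rw [hab, map_zsmul, zsmul_add]

theorem two_zsmul_mem_closure_pair {σ : G →+ G} (hσw : σ w = w) (hσz : σ z = -z)
    (hσΛ : Λ.map σ ≤ Λ) (hrank : Module.rank ℤ Λ ≤ 2) (hw : IsPrimitiveElement Λ w)
    (hz : IsPrimitiveElement Λ z) (hv : v ∈ Λ) : (2 : ℤ) • v ∈ AddSubgroup.closure {w, z} := by
  obtain ⟨m, hm : m • w = v + σ v⟩ :=
    add_map_mem_zmultiples hσw hσz hσΛ hrank hw hz.1 hz.ne_zero hv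
  -- `-σ` is the reflection with the roles of `w` and `z` exchanged
  have hneg : Λ.map (-σ) ≤ Λ := by
    rintro _ ⟨x, hx, rfl⟩
    exact Λ.neg_mem (hσΛ (AddSubgroup.mem_map_of_mem σ hx))
  obtain ⟨n, hn : n • z = v + (-σ) v⟩ := add_map_mem_zmultiples (σ := -σ) (by simp [hσz])
    (by simp [hσw]) hneg hrank hz hw.1 hw.ne_zero hv
  refine AddSubgroup.mem_closure_pair.2 ⟨m, n, ?_⟩
  rw [hm, hn, AddMonoidHom.neg_apply]
  module

theorem mem_closure_pair_of_even (hw : w ∈ Λ) (hz : IsPrimitiveElement Λ z) (hv : v ∈ Λ) {m n : ℤ}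
    (hm : Even m) (h : m • w + n • z = (2 : ℤ) • v) : v ∈ AddSubgroup.closure {w, z} := by
  obtain ⟨i, rfl⟩ := hm
  obtain ⟨j, hj : j • z = v - i • w⟩ := hz.mem_zmultiples_of_zsmul_mem
    (Λ.sub_mem hv (Λ.zsmul_mem hw i)) two_ne_zero
    ⟨n, show n • z = (2 : ℤ) • (v - i • w) by rw [zsmul_sub, ← h]; module⟩
  exact AddSubgroup.mem_closure_pair.2 ⟨i, j, by rw [hj, add_sub_cancel]⟩

theorem mem_closure_pair_or_exists_half (hw : IsPrimitiveElement Λ w)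
    (hz : IsPrimitiveElement Λ z) (hv : v ∈ Λ) (h : (2 : ℤ) • v ∈ AddSubgroup.closure {w, z}) :
    v ∈ AddSubgroup.closure {w, z} ∨
      ∃ u, (2 : ℤ) • u = w + z ∧ v - u ∈ AddSubgroup.closure {w, z} := by
  obtain ⟨m, n, hmn⟩ := AddSubgroup.mem_closure_pair.1 h
  rcases Int.even_or_odd m with hm | ⟨i, rfl⟩
  · exact .inl (mem_closure_pair_of_even hw.1 hz hv hm hmn)
  rcases Int.even_or_odd n with hn | ⟨j, rfl⟩
  · rw [add_comm] at hmn
    rw [Set.pair_comm]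
    exact .inl (mem_closure_pair_of_even hz.1 hw hv hn hmn)
  refine .inr ⟨v - (i • w + j • z), ?_, AddSubgroup.mem_closure_pair.2 ⟨i, j, ?_⟩⟩
  · rw [zsmul_sub, ← hmn]
    module
  · rw [sub_sub_cancel]

theorem closure_pair_le_closure_half (hu : (2 : ℤ) • u = w + z) (hu' : (2 : ℤ) • u' = w - z) :
    AddSubgroup.closure {w, z} ≤ AddSubgroup.closure {u, u'} := by
  have hw : w = u + u' := zsmul_right_injective two_ne_zero <|
    show (2 : ℤ) • w = (2 : ℤ) • (u + u') by rw [zsmul_add, hu, hu']; module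
  have hz : z = u - u' := zsmul_right_injective two_ne_zero <|
    show (2 : ℤ) • z = (2 : ℤ) • (u - u') by rw [zsmul_sub, hu, hu']; module
  have hmem : u ∈ AddSubgroup.closure {u, u'} := AddSubgroup.subset_closure (by simp)
  have hmem' : u' ∈ AddSubgroup.closure {u, u'} := AddSubgroup.subset_closure (by simp)
  rw [AddSubgroup.closure_le, Set.pair_subset_iff]
  exact ⟨hw ▸ add_mem hmem hmem', hz ▸ sub_mem hmem hmem'⟩

theorem eq_closure_pair_or_eq_closure_half (hw : IsPrimitiveElement Λ w)
    (hz : IsPrimitiveElement Λ z) (h : ∀ v ∈ Λ, (2 : ℤ) • v ∈ AddSubgroup.closure {w, z}) :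
    Λ = AddSubgroup.closure {w, z} ∨
      ∃ u u', (2 : ℤ) • u = w + z ∧ (2 : ℤ) • u' = w - z ∧ Λ = AddSubgroup.closure {u, u'} := by
  have hle : AddSubgroup.closure {w, z} ≤ Λ := by
    rw [AddSubgroup.closure_le, Set.pair_subset_iff]
    exact ⟨hw.1, hz.1⟩
  by_cases hge : Λ ≤ AddSubgroup.closure {w, z}
  · exact .inl (hge.antisymm hle)
  obtain ⟨v, hv, hvwz⟩ := SetLike.not_le_iff_exists.1 hge
  obtain ⟨u, hu, hvu⟩ := (mem_closure_pair_or_exists_half hw hz hv (h v hv)).resolve_left hvwz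
  have huΛ : u ∈ Λ := by simpa using Λ.sub_mem hv (hle hvu)
  have hu' : (2 : ℤ) • (u - z) = w - z := by rw [zsmul_sub, hu]; module
  have hle_half := closure_pair_le_closure_half hu hu'
  refine .inr ⟨u, u - z, hu, hu', le_antisymm (fun x hx ↦ ?_) ?_⟩
  · rcases mem_closure_pair_or_exists_half hw hz hx (h x hx) with hxwz | ⟨t, ht, hxt⟩
    · exact hle_half hxwz
    · obtain rfl : t = u := zsmul_right_injective two_ne_zero (ht.trans hu.symm)
      simpa using add_mem (hle_half hxt) (AddSubgroup.subset_closure (Set.mem_insert t {t - z}))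
  · rw [AddSubgroup.closure_le, Set.pair_subset_iff]
    exact ⟨huΛ, Λ.sub_mem huΛ hz.1⟩

theorem reflection_invariant_superlattice_general {σ : G →+ G} (hσw : σ w = w) (hσz : σ z = -z)
    (hσΛ : Λ.map σ ≤ Λ) (hrank : Module.rank ℤ Λ ≤ 2) (hw : IsPrimitiveElement Λ w)
    (hz : IsPrimitiveElement Λ z) :
    Λ = AddSubgroup.closure {w, z} ∨
      ∃ u u', (2 : ℤ) • u = w + z ∧ (2 : ℤ) • u' = w - z ∧ Λ = AddSubgroup.closure {u, u'} :=
  eq_closure_pair_or_eq_closure_half hw hz fun _ ↦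
    two_zsmul_mem_closure_pair hσw hσz hσΛ hrank hw hz

end

theorem IsPlanarLattice.rank_le_two {Λ : AddSubgroup EucPlane} (hΛ : IsPlanarLattice Λ) :
    Module.rank ℤ Λ ≤ 2 := by
  obtain ⟨v₁, v₂, -, rfl⟩ := hΛ
  exact rank_closure_pair_le v₁ v₂

theorem eq_half_smul_of_two_zsmul_eq {K V : Type*} [DivisionRing K] [NeZero (2 : K)]
    [AddCommGroup V] [Module K V] {u v : V} (h : (2 : ℤ) • u = v) : u = ((1 : K) / 2) • v := by
  rw [one_div, eq_inv_smul_iff₀ two_ne_zero, ← h, ← Int.cast_smul_eq_zsmul K, Int.cast_ofNat]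

theorem reflection_invariant_superlattice
    (w z : EucPlane) (hw : w ≠ 0) (hz : z ≠ 0) (horth : ⟪w, z⟫ = 0)
    (R : EucPlane →ₗ[ℝ] EucPlane) (hRw : R w = w) (hRz : R z = -z)
    (Λ : AddSubgroup EucPlane) (hΛ : IsPlanarLattice Λ)
    (hsub : AddSubgroup.closure {w, z} ≤ Λ)
    (hinv : Λ.map R.toAddMonoidHom = Λ)
    (hpw : IsPrimitiveIn Λ w) (hpz : IsPrimitiveIn Λ z) :
    Λ = AddSubgroup.closure {w, z} ∨
      Λ = AddSubgroup.closure {((1 : ℝ) / 2) • (w + z), ((1 : ℝ) / 2) • (w - z)} := by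
  have : IsAddTorsionFree EucPlane := .of_isTorsionFree ℝ EucPlane
  exact (reflection_invariant_superlattice_general hRw hRz hinv.le hΛ.rank_le_two hpw hpz).imp_right
    fun ⟨u, u', hu, hu', h⟩ ↦ by
      rwa [← eq_half_smul_of_two_zsmul_eq hu, ← eq_half_smul_of_two_zsmul_eq hu']
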